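/- Let M be a structure and c̄ ∈ Mⁿ, and let N be the expansion of M obtained by adding c̄ as a sequence of n new constants. Then sr(N) ≤ sr(M) ≤ sr(N) + ω + n. -/

import Mathlib

open FirstOrder

universe u v w

namespace ScottTools

variable (L : FirstOrder.Language.{u, v}) (M : Type w) (N : Type w) [L.Structure M] [L.Structure N]

/-- Two tuples (of the same length) have the same quantifier-free type. -/
def QFEquiv {n : ℕ} (a : Fin n → M) (b : Fin n → N) : Prop :=
  ∀ φ : L.Formula (Fin n), φ.IsQF → (φ.Realize a ↔ φ.Realize b)

/-- The ordinal-indexed back-and-forth equivalence `(M, ā) ≡_α (N, b̄)`: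
`≡₀` is equality of quantifier-free types, `≡_{α+1}` is the back-and-forth condition
with respect to `≡_α`, and limit stages are intersections. -/
def BFEquiv : Ordinal.{w} → (n : ℕ) → (Fin n → M) → (Fin n → N) → Prop
  | α, n, a, b =>
    QFEquiv L M N a b ∧
    ∀ β : Ordinal.{w}, β < α →
      (∀ x : M, ∃ y : N, BFEquiv β (n + 1) (Fin.snoc a x) (Fin.snoc b y)) ∧
      (∀ y : N, ∃ x : M, BFEquiv β (n + 1) (Fin.snoc a x) (Fin.snoc b y))
  termination_by α => α

/-- `(M, ā) ≡_∞ (N, b̄)`: back-and-forth equivalent for all ordinals. -/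
def BFEquivInf (n : ℕ) (a : Fin n → M) (b : Fin n → N) : Prop :=
  ∀ α : Ordinal.{w}, BFEquiv L M N α n a b

/-- The Scott rank of a structure: the least ordinal `α` such that any two finite tuples
that are `≡_α`-equivalent are `≡_∞`-equivalent. -/
noncomputable def ScottRank : Ordinal.{w} :=
  sInf {α : Ordinal.{w} | ∀ (n : ℕ) (a b : Fin n → M),
    BFEquiv L M M α n a b → BFEquivInf L M M n a b}

/-- `B` is a base for `M`: distinct elements of `M` have distinct complete first-order
types over `B`. -/
def IsBase (B : Set M) : Prop :=
  ∀ a b : M,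
    (∀ (k : ℕ) (p : Fin k → M), (∀ i, p i ∈ B) →
      ∀ φ : L.Formula (Fin (k + 1)),
        (φ.Realize (Fin.snoc p a) ↔ φ.Realize (Fin.snoc p b))) →
    a = b

end ScottTools

open ScottTools FirstOrder Language

/-- The expansion `M(c̄)` of `M` by (finitely many) constants. -/
def withConsts (L : FirstOrder.Language.{u, v}) (M : Type w) [L.Structure M] {m : ℕ}
    (c : Fin m → M) : (L[[Fin m]]).Structure M :=
  letI : (constantsOn (Fin m)).Structure M := constantsOn.structure c
  inferInstance

/-!
A back-and-forth game on `M` and `N` that starts with the moves `c̄` and `d̄` is the game on the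
expansions `(M, c̄)` and `(N, d̄)`: `(M, c̄ā) ≡_α (N, d̄b̄)` in `L` is `(M, c̄, ā) ≡_α (N, d̄, b̄)`
in the language with constants. This gives the lower bound at once.

For the upper bound, let `β` be the Scott rank of `(M, c̄)` and suppose `ā ≡_{β+ω+n} b̄`.
Playing `c̄` uses up `n` moves and produces a reply `d̄` with `(M, c̄, ā) ≡_{β+ω} (M, d̄, b̄)`.
The surplus `ω` lets every tuple `ȳ` of `(M, d̄)` be matched up to `≡_{β+1}` by some tuple `z̄`
of `(M, c̄)`. So if `x̄` in `(M, c̄)` satisfies `x̄ ≡_β ȳ`, then `x̄ ≡_β z̄` inside `(M, c̄)`,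
whence `x̄ ≡_∞ z̄` by the choice of `β`, and `x̄ ≡_{β+1} ȳ`. As `≡_β` refines `≡_{β+1}` between
the two expansions, it is `≡_∞` there.
-/

namespace ScottTools

section BackAndForth

variable {L : FirstOrder.Language.{u, v}} {M N P : Type w} [L.Structure M] [L.Structure N]
  [L.Structure P] {α β : Ordinal.{w}} {k m : ℕ} {a : Fin k → M} {b : Fin k → N} {c : Fin k → P}

theorem QFEquiv.symm (h : QFEquiv L M N a b) : QFEquiv L N M b a :=
  fun φ hφ => (h φ hφ).symm

theorem QFEquiv.trans (hab : QFEquiv L M N a b) (hbc : QFEquiv L N P b c) : QFEquiv L M P a c :=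
  fun φ hφ => (hab φ hφ).trans (hbc φ hφ)

theorem QFEquiv.comp (h : QFEquiv L M N a b) (f : Fin m → Fin k) :
    QFEquiv L M N (a ∘ f) (b ∘ f) := fun φ hφ => by
  simpa only [Formula.realize_relabel] using
    h (φ.relabel f) (BoundedFormula.IsQF.relabel hφ (Sum.inl ∘ f))

theorem bfEquiv_iff : BFEquiv L M N α k a b ↔ QFEquiv L M N a b ∧ ∀ β < α,
    (∀ x : M, ∃ y : N, BFEquiv L M N β (k + 1) (Fin.snoc a x) (Fin.snoc b y)) ∧
    (∀ y : N, ∃ x : M, BFEquiv L M N β (k + 1) (Fin.snoc a x) (Fin.snoc b y)) := by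
  rw [BFEquiv]

theorem BFEquiv.qfEquiv (h : BFEquiv L M N α k a b) : QFEquiv L M N a b :=
  (bfEquiv_iff.1 h).1

theorem BFEquiv.forth (h : BFEquiv L M N α k a b) (hβ : β < α) (x : M) :
    ∃ y : N, BFEquiv L M N β (k + 1) (Fin.snoc a x) (Fin.snoc b y) :=
  ((bfEquiv_iff.1 h).2 β hβ).1 x

theorem BFEquiv.back (h : BFEquiv L M N α k a b) (hβ : β < α) (y : N) :
    ∃ x : M, BFEquiv L M N β (k + 1) (Fin.snoc a x) (Fin.snoc b y) :=
  ((bfEquiv_iff.1 h).2 β hβ).2 y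

theorem BFEquiv.mono (h : BFEquiv L M N α k a b) (hβ : β ≤ α) : BFEquiv L M N β k a b :=
  bfEquiv_iff.2 ⟨h.qfEquiv, fun _ hγ => ⟨h.forth (hγ.trans_le hβ), h.back (hγ.trans_le hβ)⟩⟩

theorem BFEquiv.symm (h : BFEquiv L M N α k a b) : BFEquiv L N M α k b a := by
  induction α using WellFoundedLT.induction generalizing k with
  | ind α ih =>
    exact bfEquiv_iff.2 ⟨h.qfEquiv.symm, fun β hβ =>
      ⟨fun y => (h.back hβ y).imp fun _ => ih β hβ, fun x => (h.forth hβ x).imp fun _ => ih β hβ⟩⟩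

theorem BFEquiv.trans (hab : BFEquiv L M N α k a b) (hbc : BFEquiv L N P α k b c) :
    BFEquiv L M P α k a c := by
  induction α using WellFoundedLT.induction generalizing k with
  | ind α ih =>
    refine bfEquiv_iff.2 ⟨hab.qfEquiv.trans hbc.qfEquiv, fun β hβ => ⟨fun x => ?_, fun z => ?_⟩⟩
    · obtain ⟨y, hxy⟩ := hab.forth hβ x
      obtain ⟨z, hyz⟩ := hbc.forth hβ y
      exact ⟨z, ih β hβ hxy hyz⟩
    · obtain ⟨y, hyz⟩ := hbc.back hβ z
      obtain ⟨x, hxy⟩ := hab.back hβ y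
      exact ⟨x, ih β hβ hxy hyz⟩

theorem snoc_comp_snoc_castSucc_last {A : Type*} (a : Fin k → A) (f : Fin m → Fin k) (x : A) :
    (Fin.snoc a x : Fin (k + 1) → A) ∘
        (Fin.snoc (Fin.castSucc ∘ f) (Fin.last k) : Fin (m + 1) → Fin (k + 1)) =
      Fin.snoc (a ∘ f) x := by
  rw [Fin.comp_snoc, Fin.snoc_last, ← Function.comp_assoc, Fin.snoc_comp_castSucc]

theorem BFEquiv.comp (h : BFEquiv L M N α k a b) (f : Fin m → Fin k) :
    BFEquiv L M N α m (a ∘ f) (b ∘ f) := by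
  induction α using WellFoundedLT.induction generalizing k m with
  | ind α ih =>
    have h_snoc (β) (hβ : β < α) (x : M) (y : N)
        (hxy : BFEquiv L M N β (k + 1) (Fin.snoc a x) (Fin.snoc b y)) :
        BFEquiv L M N β (m + 1) (Fin.snoc (a ∘ f) x) (Fin.snoc (b ∘ f) y) := by
      simpa only [snoc_comp_snoc_castSucc_last] using
        ih β hβ hxy (Fin.snoc (Fin.castSucc ∘ f) (Fin.last k))
    exact bfEquiv_iff.2 ⟨h.qfEquiv.comp f, fun β hβ =>
      ⟨fun x => (h.forth hβ x).imp (h_snoc β hβ x),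
        fun y => (h.back hβ y).imp fun x => h_snoc β hβ x y⟩⟩

theorem BFEquiv.exists_append (h : BFEquiv L M N (α + m) k a b) (x : Fin m → M) :
    ∃ y : Fin m → N, BFEquiv L M N α (k + m) (Fin.append a x) (Fin.append b y) := by
  induction m generalizing α with
  | zero =>
    refine ⟨Fin.elim0, ?_⟩
    rw [Fin.append_right_nil _ _ rfl, Fin.append_right_nil _ _ rfl]
    exact (h.mono le_self_add).comp _
  | succ m ih =>
    rw [Nat.cast_succ, Nat.cast_add_one_comm, ← add_assoc] at h
    obtain ⟨y, hy⟩ := ih h (Fin.init x)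
    obtain ⟨z, hz⟩ := hy.forth (lt_add_one α) (x (Fin.last m))
    exact ⟨Fin.snoc y z, by rwa [← Fin.snoc_init_self x, Fin.append_snoc, Fin.append_snoc]⟩

theorem append_comp_natAdd {A : Type*} (x : Fin k → A) (y : Fin m → A) :
    Fin.append x y ∘ Fin.natAdd k = y :=
  funext (Fin.append_right x y)

theorem append_comp_append_natAdd_castAdd {A : Type*} (x : Fin k → A) (y : Fin m → A) :
    Fin.append x y ∘ Fin.append (Fin.natAdd k) (Fin.castAdd m) = Fin.append y x := by
  ext i
  cases i using Fin.addCases <;> simp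

theorem BFEquiv.of_append {x : Fin m → M} {y : Fin m → N}
    (h : BFEquiv L M N α (k + m) (Fin.append a x) (Fin.append b y)) : BFEquiv L M N α m x y := by
  simpa only [append_comp_natAdd] using h.comp (Fin.natAdd k)

theorem BFEquiv.append_swap {x : Fin m → M} {y : Fin m → N}
    (h : BFEquiv L M N α (k + m) (Fin.append a x) (Fin.append b y)) :
    BFEquiv L M N α (m + k) (Fin.append x a) (Fin.append y b) := by
  simpa only [append_comp_append_natAdd_castAdd] using
    h.comp (Fin.append (Fin.natAdd k) (Fin.castAdd m))

theorem BFEquiv.bfEquivInf_of_forall_add_one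
    (hβ : ∀ (m : ℕ) (x : Fin m → M) (y : Fin m → N),
      BFEquiv L M N β m x y → BFEquiv L M N (β + 1) m x y)
    (h : BFEquiv L M N β k a b) : BFEquivInf L M N k a b := by
  intro α
  induction α using WellFoundedLT.induction generalizing k with
  | ind α ih =>
    have h_succ := hβ k a b h
    exact bfEquiv_iff.2 ⟨h.qfEquiv, fun γ hγ =>
      ⟨fun x => (h_succ.forth (lt_add_one β) x).imp fun _ hxy => ih γ hγ hxy,
        fun y => (h_succ.back (lt_add_one β) y).imp fun _ hxy => ih γ hγ hxy⟩⟩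

end BackAndForth

section ScottRank

variable {L : FirstOrder.Language.{u, v}} {M N : Type w} [L.Structure M] [L.Structure N]
  {α β : Ordinal.{w}} {k : ℕ} {a : Fin k → M} {b : Fin k → N}

variable (L M N) in
theorem exists_forall_bfEquiv_imp_bfEquivInf : ∃ α : Ordinal.{w},
    ∀ (k : ℕ) (a : Fin k → M) (b : Fin k → N),
      BFEquiv L M N α k a b → BFEquivInf L M N k a b := by
  have h_stage (p : Σ k : ℕ, (Fin k → M) × (Fin k → N)) : ∃ α : Ordinal.{w},
      BFEquiv L M N α p.1 p.2.1 p.2.2 → BFEquivInf L M N p.1 p.2.1 p.2.2 := by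
    by_contra! h
    exact (h 0).2 fun α => (h α).1
  choose stage h_stage using h_stage
  exact ⟨⨆ p, stage p, fun k a b h =>
    h_stage ⟨k, a, b⟩ (h.mono (Ordinal.le_iSup stage ⟨k, a, b⟩))⟩

theorem scottRank_le_iff : ScottRank L M ≤ α ↔
    ∀ (k : ℕ) (a b : Fin k → M), BFEquiv L M M α k a b → BFEquivInf L M M k a b := by
  refine ⟨fun hα k a b h => ?_, fun h => csInf_le' h⟩
  exact csInf_mem (exists_forall_bfEquiv_imp_bfEquivInf L M M) k a b (h.mono hα)

theorem BFEquiv.exists_tuple_of_add_omega0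
    (h : BFEquiv L M N (β + Ordinal.omega0) k a b) (m : ℕ) (x : Fin m → M) :
    ∃ y : Fin m → N, BFEquiv L M N (β + 1) m x y := by
  have h_le : β + 1 + m ≤ β + Ordinal.omega0 := by
    rw [add_assoc, ← Nat.cast_one, ← Nat.cast_add]
    gcongr
    exact (Ordinal.natCast_lt_omega0 _).le
  exact ((h.mono h_le).exists_append x).imp fun _ => BFEquiv.of_append

theorem BFEquiv.bfEquivInf_of_scottRank_le (hβ : ScottRank L M ≤ β)
    (h : BFEquiv L M N (β + Ordinal.omega0) k a b) : BFEquivInf L M N k a b := by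
  refine (h.mono le_self_add).bfEquivInf_of_forall_add_one fun m x y hxy => ?_
  obtain ⟨x', hyx'⟩ := h.symm.exists_tuple_of_add_omega0 m y
  have hxx' : BFEquivInf L M M m x x' :=
    scottRank_le_iff.1 hβ m x x' (hxy.trans (hyx'.mono le_self_add))
  exact (hxx' (β + 1)).trans hyx'.symm

end ScottRank

section Constants

theorem isQF_imp_iff {L : FirstOrder.Language} {A : Type*} {n : ℕ} {φ ψ : L.BoundedFormula A n} :
    (φ.imp ψ).IsQF ↔ φ.IsQF ∧ ψ.IsQF := by
  refine ⟨fun h => ?_, fun h => h.1.imp h.2⟩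
  cases h with
  | of_isAtomic h_atomic => cases h_atomic
  | imp hφ hψ => exact ⟨hφ, hψ⟩

theorem isQF_mapTermRel_iff {L : FirstOrder.Language} {L' : FirstOrder.Language} {A B : Type*}
    {g : ℕ → ℕ} (ft : ∀ n, L.Term (A ⊕ Fin n) → L'.Term (B ⊕ Fin (g n)))
    (fr : ∀ n, L.Relations n → L'.Relations n)
    (h : ∀ n, L'.BoundedFormula B (g (n + 1)) → L'.BoundedFormula B (g n + 1))
    {n : ℕ} (φ : L.BoundedFormula A n) : (φ.mapTermRel ft fr h).IsQF ↔ φ.IsQF := by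
  induction φ with
  | falsum => exact iff_of_true .falsum .falsum
  | equal t₁ t₂ =>
    exact iff_of_true (BoundedFormula.IsAtomic.equal _ _).isQF
      (BoundedFormula.IsAtomic.equal _ _).isQF
  | rel R ts =>
    exact iff_of_true (BoundedFormula.IsAtomic.rel _ _).isQF (BoundedFormula.IsAtomic.rel _ _).isQF
  | imp φ ψ ihφ ihψ =>
    exact isQF_imp_iff.trans ((and_congr ihφ ihψ).trans isQF_imp_iff.symm)
  | all φ _ =>
    exact iff_of_false (BoundedFormula.not_all_isQF _) (BoundedFormula.not_all_isQF _)

variable {L : FirstOrder.Language.{u, v}} {M N : Type w} [L.Structure M] [L.Structure N]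
  {α : Ordinal.{w}} {n k : ℕ} (c : Fin n → M) (d : Fin n → N) {a : Fin k → M} {b : Fin k → N}

/-- The translation of formulas with `n` new constants into formulas without them, replacing the
constants by free variables. The new variables come first, so that a tuple `ā` interpreting the
old ones becomes `c̄ā`, where `c̄` interprets the constants. -/
def constantsFormulaEquiv (L : FirstOrder.Language.{u, v}) (n k : ℕ) :
    L[[Fin n]].Formula (Fin k) ≃ L.Formula (Fin (n + k)) :=
  BoundedFormula.constantsVarsEquiv.trans (BoundedFormula.relabelEquiv finSumFinEquiv)

theorem isQF_constantsFormulaEquiv_iff (φ : L[[Fin n]].Formula (Fin k)) :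
    (constantsFormulaEquiv L n k φ).IsQF ↔ φ.IsQF :=
  (isQF_mapTermRel_iff _ _ _ _).trans (isQF_mapTermRel_iff _ _ _ φ)

theorem realize_constantsFormulaEquiv (φ : L[[Fin n]].Formula (Fin k)) (a : Fin k → M) :
    (constantsFormulaEquiv L n k φ).Realize (Fin.append c a) ↔
      letI := withConsts L M c; φ.Realize a := by
  let _ := withConsts L M c
  have : (L.lhomWithConstants (Fin n)).IsExpansionOn M := ⟨fun _ _ => rfl, fun _ _ => rfl⟩
  have h_append : Fin.append c a ∘ finSumFinEquiv = Sum.elim (fun i => (L.con i : M)) a :=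
    Fin.append_comp_sumElim
  refine BoundedFormula.realize_relabelEquiv.trans ?_
  rw [h_append]
  exact BoundedFormula.realize_constantsVarsEquiv

theorem qfEquiv_withConsts_iff :
    @QFEquiv L[[Fin n]] M N (withConsts L M c) (withConsts L N d) k a b ↔
      QFEquiv L M N (Fin.append c a) (Fin.append d b) :=
  (constantsFormulaEquiv L n k).forall_congr fun φ =>
    imp_congr (isQF_constantsFormulaEquiv_iff φ).symm <|
      iff_congr (realize_constantsFormulaEquiv c φ a).symm
        (realize_constantsFormulaEquiv d φ b).symm

theorem bfEquiv_withConsts_iff :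
    @BFEquiv L[[Fin n]] M N (withConsts L M c) (withConsts L N d) α k a b ↔
      BFEquiv L M N α (n + k) (Fin.append c a) (Fin.append d b) := by
  let _ := withConsts L M c
  let _ := withConsts L N d
  induction α using WellFoundedLT.induction generalizing k with
  | ind α ih =>
    rw [bfEquiv_iff, bfEquiv_iff (L := L), qfEquiv_withConsts_iff]
    refine and_congr_right' (forall₂_congr fun β hβ => ?_)
    simp only [ih β hβ, Fin.append_snoc]
    rfl

theorem BFEquiv.bfEquivInf_append {β : Ordinal.{w}}
    (hβ : @ScottRank L[[Fin n]] M (withConsts L M c) ≤ β)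
    (h : BFEquiv L M N (β + Ordinal.omega0) (n + k) (Fin.append c a) (Fin.append d b)) :
    BFEquivInf L M N (n + k) (Fin.append c a) (Fin.append d b) := by
  let _ := withConsts L M c
  let _ := withConsts L N d
  have h_consts : BFEquivInf L[[Fin n]] M N k a b :=
    BFEquiv.bfEquivInf_of_scottRank_le hβ ((bfEquiv_withConsts_iff c d).2 h)
  exact fun α => (bfEquiv_withConsts_iff c d).1 (h_consts α)

theorem scottRank_withConsts_le : @ScottRank L[[Fin n]] M (withConsts L M c) ≤ ScottRank L M := by
  let _ := withConsts L M c
  refine scottRank_le_iff.2 fun k a b h α => (bfEquiv_withConsts_iff c c).2 ?_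
  exact scottRank_le_iff.1 le_rfl _ _ _ ((bfEquiv_withConsts_iff c c).1 h) α

theorem scottRank_le_scottRank_withConsts_add :
    ScottRank L M ≤ @ScottRank L[[Fin n]] M (withConsts L M c) + Ordinal.omega0 + n := by
  refine scottRank_le_iff.2 fun k a b h α => ?_
  obtain ⟨d, hd⟩ := h.exists_append c
  exact BFEquiv.of_append (BFEquiv.bfEquivInf_append c d le_rfl hd.append_swap α)

end Constants

end ScottTools

/-- If `N` is the expansion of `M` by constants for an `n`-tuple `c̄`, then
`sr(N) ≤ sr(M) ≤ sr(N) + ω + n`. -/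
theorem scottRank_withConstants {L : FirstOrder.Language.{u, v}} {M : Type w}
    [L.Structure M] {n : ℕ} (c : Fin n → M) :
    @ScottRank (L[[Fin n]]) M (withConsts L M c) ≤ ScottRank L M ∧
      ScottRank L M ≤ @ScottRank (L[[Fin n]]) M (withConsts L M c) + Ordinal.omega0 + n :=
  ⟨scottRank_withConsts_le c, scottRank_le_scottRank_withConsts_add c⟩
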